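/- arXiv:2305.18761 — 4 statements merged into one kernel-verified Lean document; each statement's English description precedes it below -/
import Mathlib

section
/- Let M be a D×D real symmetric positive semidefinite matrix whose ℓ2 operator norm satisfies ‖M‖ ≤ 1, and let I denote the D×D identity matrix. Then for every natural number t, ‖(∑_{k=0}^{t−1} (I − M)^k) − t·I‖ ≤ ‖M‖ · t(t−1)/2, where ‖·‖ is the ℓ2 operator norm on matrices. -/
open Matrix

/-!
Write `T` for the operator of `M`. Positivity together with `‖T‖ ≤ 1` makes `1 - T` a contraction
(`norm_one_sub_le_one`). The identity `(1 - T)^(k+1) - 1 = (1 - T) * ((1 - T)^k - 1) - T` then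
gives `‖(1 - T)^k - 1‖ ≤ k * ‖T‖` by induction on `k` (`norm_one_sub_pow_sub_one_le`), and summing
over `k < t` yields `‖T‖ * t * (t - 1) / 2`.
-/

/-- The inequality rests on `‖T x‖ ^ 2 ≤ ⟪T x, x⟫`, which follows from positivity of the quadratic
form of `T` at `x - T x`. -/
lemma norm_one_sub_le_one {E : Type*} [NormedAddCommGroup E] [InnerProductSpace ℝ E]
    (T : E →L[ℝ] E) (hs : ∀ x y, inner ℝ (T x) y = inner ℝ x (T y))
    (hp : ∀ x, 0 ≤ inner ℝ (T x) x) (hT : ‖T‖ ≤ 1) : ‖1 - T‖ ≤ 1 := by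
  refine ContinuousLinearMap.opNorm_le_bound _ zero_le_one fun x => ?_
  have hTTx : inner ℝ (T (T x)) (T x) ≤ ‖T x‖ ^ 2 := by
    have h1 : ‖T (T x)‖ ≤ ‖T x‖ := by simpa using T.le_of_opNorm_le hT (T x)
    calc inner ℝ (T (T x)) (T x) ≤ ‖T (T x)‖ * ‖T x‖ := real_inner_le_norm _ _
      _ ≤ ‖T x‖ * ‖T x‖ := by gcongr
      _ = ‖T x‖ ^ 2 := by ring
  have hquad := hp (x - T x)
  rw [map_sub, inner_sub_left, inner_sub_right, inner_sub_right, hs (T x) x,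
    real_inner_self_eq_norm_sq] at hquad
  have hexp : ‖x - T x‖ ^ 2 = ‖x‖ ^ 2 - 2 * inner ℝ (T x) x + ‖T x‖ ^ 2 := by
    rw [norm_sub_sq_real, real_inner_comm]
  have hle : ‖x - T x‖ ≤ ‖x‖ := by
    refine le_of_sq_le_sq ?_ (norm_nonneg x)
    linarith [hp x]
  simpa using hle

lemma norm_one_sub_pow_sub_one_le {R : Type*} [NormedRing R] (a : R) (h : ‖1 - a‖ ≤ 1) (k : ℕ) :
    ‖(1 - a) ^ k - 1‖ ≤ k * ‖a‖ := by
  induction k with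
  | zero => simp
  | succ k ih =>
    -- Multiplying the error by `1 - a` avoids bounding `‖(1 - a) ^ 0‖ = ‖1‖`,
    -- which is not available without `NormOneClass`.
    have hrec : (1 - a) ^ (k + 1) - 1 = (1 - a) * ((1 - a) ^ k - 1) - a := by
      rw [pow_succ', mul_sub, mul_one]; abel
    calc ‖(1 - a) ^ (k + 1) - 1‖ ≤ ‖(1 - a) * ((1 - a) ^ k - 1)‖ + ‖a‖ := by
          rw [hrec]; exact norm_sub_le _ _
      _ ≤ 1 * (k * ‖a‖) + ‖a‖ := by
          gcongr
          exact (norm_mul_le _ _).trans (mul_le_mul h ih (norm_nonneg _) zero_le_one)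
      _ = ((k + 1 : ℕ) : ℝ) * ‖a‖ := by push_cast; ring

/-- For a `D×D` real symmetric positive semidefinite matrix `M` with ℓ2 operator norm
`‖M‖ ≤ 1`, for every natural number `t`,
`‖(∑_{k=0}^{t−1} (I − M)^k) − t·I‖ ≤ ‖M‖ · t(t−1)/2` in ℓ2 operator norm.
The ℓ2 operator norm of a square matrix `N` is expressed as `‖Matrix.toEuclideanCLM N‖`. -/
theorem stmt_2 (D : ℕ) (M : Matrix (Fin D) (Fin D) ℝ)
    (hsymm : M.IsSymm) (hpsd : M.PosSemidef)
    (hnorm : ‖toEuclideanCLM (𝕜 := ℝ) M‖ ≤ 1) :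
    ∀ t : ℕ,
      ‖toEuclideanCLM (𝕜 := ℝ)
          ((∑ k ∈ Finset.range t, (1 - M) ^ k) - (t : ℝ) • (1 : Matrix (Fin D) (Fin D) ℝ))‖ ≤
        ‖toEuclideanCLM (𝕜 := ℝ) M‖ * (t * (t - 1) / 2) := by
  set T := toEuclideanCLM (𝕜 := ℝ) M with hTdef
  have hpos : (toEuclideanLin M).IsPositive := isPositive_toEuclideanLin_iff.mpr hpsd
  have hcontr : ‖1 - T‖ ≤ 1 :=
    norm_one_sub_le_one T (fun x y => hpos.isSymmetric x y)
      (fun x => hpos.re_inner_nonneg_left x) hnorm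
  intro t
  have hmap : toEuclideanCLM (𝕜 := ℝ)
      ((∑ k ∈ Finset.range t, (1 - M) ^ k) - (t : ℝ) • (1 : Matrix (Fin D) (Fin D) ℝ)) =
      ∑ k ∈ Finset.range t, ((1 - T) ^ k - 1) := by
    rw [Nat.cast_smul_eq_nsmul ℝ, map_sub, map_sum, map_nsmul, map_one, Finset.sum_sub_distrib]
    simp [hTdef]
  rw [hmap]
  have hsum : ∀ n : ℕ, ∑ k ∈ Finset.range n, (k : ℝ) * ‖T‖ = ‖T‖ * (n * (n - 1) / 2) := by
    intro n
    induction n with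
    | zero => simp
    | succ n ih => rw [Finset.sum_range_succ, ih]; push_cast; ring
  rw [← hsum]
  exact norm_sum_le_of_le _ fun k _ => norm_one_sub_pow_sub_one_le T hcontr k
end

section
/- Let Ψ be a real n×D matrix (n ≥ 1), y ∈ ℝⁿ, and η > 0. Define the gradient descent iterates β(0) = 0 and β(t+1) = β(t) − (η/n)Ψᵀ(Ψβ(t) − y). If (η/n)‖ΨᵀΨ‖ ≤ 1, where ‖·‖ is the ℓ2 operator norm, then for every natural number t, ‖β(t) − t·(η/n)Ψᵀy‖ ≤ (η/n)² · ‖ΨᵀΨ‖ · ‖Ψᵀy‖ · t(t−1)/2. -/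
/-!
Write `P` for the linear map of `Ψ`, `A = P†P`, `c = η / n` and `g = P†y`. The error
`e t = β t - t c g` satisfies `e (t + 1) = (1 - c A) (e t) - t c² A g`. Since `‖A‖ = ‖P‖²`, the step
size condition reads `c ‖P‖² ≤ 1`, which makes `1 - c A` non-expansive (`norm_sub_smul_adjoint_le`).
Each step therefore adds at most `t c² ‖A‖ ‖g‖` to the error, and these increments sum to the
bound.
-/

open Matrix

/-- A gradient step of size `c` with `c ‖P‖² ≤ 1` is non-expansive: the square of the left side is
`‖x‖² - 2c ‖Px‖² + c² ‖P†Px‖²`, and `c ‖P†Px‖² ≤ c ‖P‖² ‖Px‖² ≤ ‖Px‖²`. -/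
lemma norm_sub_smul_adjoint_le {E F : Type*} [NormedAddCommGroup E] [InnerProductSpace ℝ E]
    [CompleteSpace E] [NormedAddCommGroup F] [InnerProductSpace ℝ F] [CompleteSpace F]
    (P : E →L[ℝ] F) {c : ℝ} (hc : 0 ≤ c) (hP : c * (‖P‖ * ‖P‖) ≤ 1) (x : E) :
    ‖x - c • P.adjoint (P x)‖ ≤ ‖x‖ := by
  have h1 : ‖P.adjoint (P x)‖ ≤ ‖P‖ * ‖P x‖ := by
    simpa using P.adjoint.le_opNorm (P x)
  have h2 : ‖P.adjoint (P x)‖ ^ 2 ≤ (‖P‖ * ‖P x‖) ^ 2 := by gcongr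
  have h3 : c * ‖P.adjoint (P x)‖ ^ 2 ≤ ‖P x‖ ^ 2 := by
    calc c * ‖P.adjoint (P x)‖ ^ 2 ≤ c * (‖P‖ * ‖P x‖) ^ 2 := by gcongr
      _ = c * (‖P‖ * ‖P‖) * ‖P x‖ ^ 2 := by ring
      _ ≤ 1 * ‖P x‖ ^ 2 := by gcongr
      _ = ‖P x‖ ^ 2 := one_mul _
  have h4 : ‖x - c • P.adjoint (P x)‖ ^ 2
      = ‖x‖ ^ 2 - 2 * (c * ‖P x‖ ^ 2) + c * (c * ‖P.adjoint (P x)‖ ^ 2) := by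
    rw [norm_sub_sq_real, inner_smul_right, ContinuousLinearMap.adjoint_inner_right,
      real_inner_self_eq_norm_sq, norm_smul, mul_pow, Real.norm_eq_abs, sq_abs]
    ring
  have h5 := mul_le_mul_of_nonneg_left h3 hc
  have h6 : 0 ≤ c * ‖P x‖ ^ 2 := by positivity
  exact le_of_sq_le_sq (by linarith) (norm_nonneg _)

/-- Gradient descent `β(0) = 0`, `β(t+1) = β(t) − (η/n)Ψᵀ(Ψβ(t) − y)` on the least-squares
loss, with `(η/n)‖ΨᵀΨ‖ ≤ 1` (ℓ2 operator norm), satisfies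
`‖β(t) − t·(η/n)Ψᵀy‖ ≤ (η/n)² ‖ΨᵀΨ‖ ‖Ψᵀy‖ t(t−1)/2` for every `t`. -/
theorem stmt_4 (n D : ℕ) (hn : 1 ≤ n) (Ψ : Matrix (Fin n) (Fin D) ℝ)
    (y : EuclideanSpace ℝ (Fin n)) (η : ℝ) (hη : 0 < η)
    (hstep : (η / n) * ‖toEuclideanCLM (𝕜 := ℝ) (Ψᵀ * Ψ)‖ ≤ 1)
    (β : ℕ → EuclideanSpace ℝ (Fin D)) (h0 : β 0 = 0)
    (hrec : ∀ t : ℕ,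
      β (t + 1) = β t - (η / n) • toEuclideanLin Ψᵀ (toEuclideanLin Ψ (β t) - y)) :
    ∀ t : ℕ,
      ‖β t - ((t : ℝ) * (η / n)) • toEuclideanLin Ψᵀ y‖ ≤
        (η / n) ^ 2 * ‖toEuclideanCLM (𝕜 := ℝ) (Ψᵀ * Ψ)‖ * ‖toEuclideanLin Ψᵀ y‖ *
          (t * (t - 1) / 2) := by
  set P : EuclideanSpace ℝ (Fin D) →L[ℝ] EuclideanSpace ℝ (Fin n) :=
    (toEuclideanLin Ψ).toContinuousLinearMap with hPdef
  have hadj : ∀ z, toEuclideanLin Ψᵀ z = P.adjoint z := by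
    intro z
    refine ext_inner_right ℝ fun w => ?_
    rw [ContinuousLinearMap.adjoint_inner_left, ← conjTranspose_eq_transpose_of_trivial,
      toEuclideanLin_conjTranspose_eq_adjoint, LinearMap.adjoint_inner_left]
    rfl
  have hA : toEuclideanCLM (𝕜 := ℝ) (Ψᵀ * Ψ) = P.adjoint ∘L P := by
    ext1 x
    rw [ContinuousLinearMap.comp_apply, ← hadj]
    apply (WithLp.ofLp_injective 2)
    simp [hPdef, ofLp_toEuclideanCLM, mulVec_mulVec]
  have hnorm : ‖toEuclideanCLM (𝕜 := ℝ) (Ψᵀ * Ψ)‖ = ‖P‖ * ‖P‖ := by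
    rw [hA, ContinuousLinearMap.norm_adjoint_comp_self]
  rw [hnorm] at hstep ⊢
  have hc : 0 ≤ η / n := by positivity
  set c : ℝ := η / n
  set g := toEuclideanLin Ψᵀ y with hg
  have hgP : ‖P.adjoint (P g)‖ ≤ ‖P‖ * ‖P‖ * ‖g‖ := by
    rw [← ContinuousLinearMap.norm_adjoint_comp_self]
    exact (P.adjoint ∘L P).le_opNorm g
  intro t
  induction t with
  | zero => simp [h0]
  | succ t ih =>
    have hstep_eq : β (t + 1) - (((t + 1 : ℕ) : ℝ) * c) • g
        = ((β t - ((t : ℝ) * c) • g) - c • P.adjoint (P (β t - ((t : ℝ) * c) • g)))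
          - (t * c ^ 2) • P.adjoint (P g) := by
      have hβ : toEuclideanLin Ψ (β t) = P (β t) := rfl
      rw [hrec, map_sub, ← hg, hβ, hadj]
      simp only [map_sub, map_smul]
      push_cast
      module
    rw [hstep_eq]
    have h2 : ‖(t * c ^ 2) • P.adjoint (P g)‖ ≤ t * c ^ 2 * (‖P‖ * ‖P‖ * ‖g‖) := by
      rw [norm_smul, Real.norm_of_nonneg (by positivity)]
      gcongr
    have h3 := (norm_sub_le _ _).trans
      (add_le_add ((norm_sub_smul_adjoint_le P hc hstep _).trans ih) h2)
    refine h3.trans (le_of_eq ?_)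
    push_cast
    ring
end

section
/- Under the data model, consider gradient descent β(0) = 0, β(t+1) = β(t) − (η/n)Xᵀ(Xβ(t) − y) with η > 0 and (η/n)‖XᵀX‖ ≤ 1 (ℓ2 operator norm). Then for each class label c ∈ {1, −1} and every natural number t, the alignment of the iterate with the core feature satisfies |⟨v_c, β(t)⟩ − (ηt/n)(c·n_c·‖v_c‖² + ⟨v_c, ∑_i y_i ξ_i⟩)| ≤ ‖v_c‖ · (η/n)² · ‖XᵀX‖ · ‖Xᵀy‖ · t(t−1)/2. That is, the contribution of the core feature grows linearly in t at rate proportional to (η/n) n_c ‖v_c‖², up to the noise alignment and a quadratically small error. -/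
open Matrix
open scoped Classical
open scoped RealInnerProductSpace

/-!
Write `a = η / n`, `G = XᵀX`, `g = Xᵀy`. The recursion reads `β (t+1) = β t - a G (β t) + a g`.
Since `G` is positive semidefinite with `a ‖G‖ ≤ 1`, the map `1 - a G` is nonexpansive
(`norm_sub_smul_gram_le`), so `‖β t‖ ≤ a t ‖g‖`. Hence `β t` drifts away from the linear path
`t a g` by at most `a ‖G‖ ‖β t‖ ≤ a² ‖G‖ ‖g‖ t` per step, and summing gives
`‖β t - a t g‖ ≤ a² ‖G‖ ‖g‖ t (t - 1) / 2` (`norm_iterate_sub_le`). Pairing with `v c`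
and using Cauchy–Schwarz yields the error bound; the linear term is identified by
orthogonality of the features (`inner_core_sum`).
-/

section Gram

variable {E F : Type*} [NormedAddCommGroup E] [InnerProductSpace ℝ E]
  [NormedAddCommGroup F] [InnerProductSpace ℝ F]

/-- A gradient step `1 - a G` with `G = LᵗL` and `a ‖G‖ ≤ 1` is nonexpansive. The key point is
`‖G u‖² ≤ ‖G‖ ⟪u, G u⟫`, which is Cauchy–Schwarz for the form `⟪L ·, L ·⟫`. -/
lemma norm_sub_smul_gram_le (L : E →ₗ[ℝ] F) (Lt : F →ₗ[ℝ] E)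
    (hadj : ∀ u w, ⟪u, Lt w⟫ = ⟪L u, w⟫) (G : E →L[ℝ] E) (hG : ∀ u, G u = Lt (L u))
    (a : ℝ) (ha : 0 ≤ a) (haG : a * ‖G‖ ≤ 1) (u : E) : ‖u - a • G u‖ ≤ ‖u‖ := by
  have h1 : ⟪u, G u⟫ = ‖L u‖ ^ 2 := by
    rw [hG, hadj, real_inner_self_eq_norm_sq]
  have h2 : ‖G u‖ ^ 2 ≤ ‖L (G u)‖ * ‖L u‖ := by
    calc ‖G u‖ ^ 2 = ⟪G u, Lt (L u)⟫ := by rw [← hG, real_inner_self_eq_norm_sq]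
      _ = ⟪L (G u), L u⟫ := hadj _ _
      _ ≤ _ := real_inner_le_norm _ _
  have h3 : ‖L (G u)‖ ^ 2 ≤ ‖G‖ * ‖G u‖ ^ 2 := by
    calc ‖L (G u)‖ ^ 2 = ⟪G u, G (G u)⟫ := by rw [hG (G u), hadj, real_inner_self_eq_norm_sq]
      _ ≤ ‖G u‖ * ‖G (G u)‖ := real_inner_le_norm _ _
      _ ≤ ‖G u‖ * (‖G‖ * ‖G u‖) := by gcongr; exact G.le_opNorm _
      _ = _ := by ring
  have h4 : ‖G u‖ ^ 2 ≤ ‖G‖ * ‖L u‖ ^ 2 := by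
    rcases (sq_nonneg ‖G u‖).eq_or_lt with h | h
    · rw [← h]; positivity
    · refine le_of_mul_le_mul_left ?_ h
      calc ‖G u‖ ^ 2 * ‖G u‖ ^ 2 ≤ (‖L (G u)‖ * ‖L u‖) * (‖L (G u)‖ * ‖L u‖) := by gcongr
        _ = ‖L (G u)‖ ^ 2 * ‖L u‖ ^ 2 := by ring
        _ ≤ (‖G‖ * ‖G u‖ ^ 2) * ‖L u‖ ^ 2 := by gcongr
        _ = _ := by ring
  have h5 : a ^ 2 * ‖G u‖ ^ 2 ≤ a * ‖L u‖ ^ 2 := by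
    calc a ^ 2 * ‖G u‖ ^ 2 ≤ a ^ 2 * (‖G‖ * ‖L u‖ ^ 2) := by gcongr
      _ = (a * ‖G‖) * (a * ‖L u‖ ^ 2) := by ring
      _ ≤ 1 * (a * ‖L u‖ ^ 2) := by gcongr
      _ = _ := one_mul _
  have h6 : 0 ≤ a * ‖L u‖ ^ 2 := by positivity
  refine le_of_sq_le_sq ?_ (norm_nonneg u)
  rw [norm_sub_sq_real, inner_smul_right, h1, norm_smul, Real.norm_eq_abs, mul_pow, sq_abs]
  linarith

/-- Deviation of the iterates `β (t+1) = (1 - a G) (β t) + a g` from the linear path `t a g`. -/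
lemma norm_iterate_sub_le (G : E →L[ℝ] E) (g : E) (a : ℝ) (ha : 0 ≤ a)
    (hcon : ∀ u, ‖u - a • G u‖ ≤ ‖u‖) (β : ℕ → E) (h0 : β 0 = 0)
    (hrec : ∀ t, β (t + 1) = (β t - a • G (β t)) + a • g) (t : ℕ) :
    ‖β t - (a * t) • g‖ ≤ a ^ 2 * ‖G‖ * ‖g‖ * (t * (t - 1) / 2) := by
  have hβ : ∀ t : ℕ, ‖β t‖ ≤ a * t * ‖g‖ := by
    intro t
    induction t with
    | zero => simp [h0]
    | succ t ih =>
      calc ‖β (t + 1)‖ ≤ ‖β t - a • G (β t)‖ + ‖a • g‖ := by rw [hrec]; exact norm_add_le _ _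
        _ ≤ a * t * ‖g‖ + a * ‖g‖ := by
          rw [norm_smul, Real.norm_of_nonneg ha]
          gcongr
          exact (hcon _).trans ih
        _ = _ := by push_cast; ring
  induction t with
  | zero => simp [h0]
  | succ t ih =>
    have hsplit : β (t + 1) - (a * (t + 1 : ℕ)) • g = (β t - (a * t) • g) - a • G (β t) := by
      rw [hrec]; push_cast; module
    calc ‖β (t + 1) - (a * (t + 1 : ℕ)) • g‖ ≤ ‖β t - (a * t) • g‖ + ‖a • G (β t)‖ := by
          rw [hsplit]; exact norm_sub_le _ _
      _ ≤ a ^ 2 * ‖G‖ * ‖g‖ * (t * (t - 1) / 2) + a * (‖G‖ * (a * t * ‖g‖)) := by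
          rw [norm_smul, Real.norm_of_nonneg ha]
          gcongr
          exact (G.le_opNorm _).trans (by gcongr; exact hβ t)
      _ = _ := by push_cast; ring

/-- Pairing `Xᵀy = ∑ i, y i • x i` with a core feature: only the core features of the same class
and the noise contribute. -/
lemma inner_core_sum {n : ℕ} (x ξ s : Fin n → E) (y : Fin n → ℝ)
    (hy : ∀ i, y i = 1 ∨ y i = -1) (v : ℝ → E)
    (hx : ∀ i, x i = v (y i) + s i + ξ i) (horth_core : ⟪v 1, v (-1)⟫ = 0)
    (c : ℝ) (hc : c = 1 ∨ c = -1) (hs : ∀ i, ⟪v c, s i⟫ = 0) :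
    ⟪v c, ∑ i, y i • x i⟫ =
      c * ((Finset.univ.filter fun i => y i = c).card : ℝ) * ‖v c‖ ^ 2 +
        ⟪v c, ∑ i, y i • ξ i⟫ := by
  have hterm : ∀ i, ⟪v c, y i • x i⟫ =
      (if y i = c then c * ‖v c‖ ^ 2 else 0) + ⟪v c, y i • ξ i⟫ := by
    intro i
    have hcore : y i * ⟪v c, v (y i)⟫ = if y i = c then c * ‖v c‖ ^ 2 else 0 := by
      split_ifs with h
      · rw [h, real_inner_self_eq_norm_sq]
      · have horth_core' : ⟪v (-1), v 1⟫ = 0 := by rw [real_inner_comm, horth_core]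
        rcases hy i with h1 | h1 <;> rcases hc with rfl | rfl <;> simp_all
    rw [hx, inner_smul_right, inner_smul_right, inner_add_right, inner_add_right, hs i, ← hcore]
    ring
  rw [inner_sum, inner_sum, Finset.sum_congr rfl fun i _ => hterm i, Finset.sum_add_distrib,
    ← Finset.sum_filter, Finset.sum_const, nsmul_eq_mul]
  ring

end Gram

/-- Data model: `n` examples `x i = v (y i) + s i + ξ i` in `ℝ^d` with labels
`y i ∈ {1, −1}`, core features `v 1, v (−1)`, spurious features from a finite orthogonal
set `A`, and `X` the matrix with rows `x i`.  Gradient descent `β(0) = 0`,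
`β(t+1) = β(t) − (η/n)Xᵀ(Xβ(t) − y)` with `η > 0` and `(η/n)‖XᵀX‖ ≤ 1` (ℓ2 operator norm)
satisfies, for each class `c ∈ {1, −1}` and every `t`,
`|⟪v c, β t⟫ − (ηt/n)(c·n_c·‖v c‖² + ⟪v c, ∑ i, y i • ξ i⟫)|
  ≤ ‖v c‖ (η/n)² ‖XᵀX‖ ‖Xᵀy‖ t(t−1)/2`. -/
theorem stmt_9 (d n : ℕ)
    (x ξ s : Fin n → EuclideanSpace ℝ (Fin d))
    (y : Fin n → ℝ) (hy : ∀ i, y i = 1 ∨ y i = -1)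
    (v : ℝ → EuclideanSpace ℝ (Fin d))
    (A : Finset (EuclideanSpace ℝ (Fin d))) (hs : ∀ i, s i ∈ A)
    (hx : ∀ i, x i = v (y i) + s i + ξ i)
    (horth_core : ⟪v 1, v (-1)⟫ = 0)
    (horth_cs : ∀ c : ℝ, c = 1 ∨ c = -1 → ∀ u ∈ A, ⟪v c, u⟫ = 0)
    (horth_ss : ∀ u ∈ A, ∀ w ∈ A, u ≠ w → ⟪u, w⟫ = 0)
    (X : Matrix (Fin n) (Fin d) ℝ)
    (hX : X = Matrix.of fun i => (WithLp.equiv 2 (Fin d → ℝ)) (x i))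
    (yE : EuclideanSpace ℝ (Fin n))
    (hyE : yE = (WithLp.equiv 2 (Fin n → ℝ)).symm y)
    (η : ℝ) (hη : 0 < η)
    (hstep : (η / n) * ‖toEuclideanCLM (𝕜 := ℝ) (Xᵀ * X)‖ ≤ 1)
    (β : ℕ → EuclideanSpace ℝ (Fin d)) (h0 : β 0 = 0)
    (hrec : ∀ t : ℕ,
      β (t + 1) = β t - (η / n) • toEuclideanLin Xᵀ (toEuclideanLin X (β t) - yE))
    (c : ℝ) (hc : c = 1 ∨ c = -1) :
    ∀ t : ℕ,
      |⟪v c, β t⟫ -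
          (η * t / n) *
            (c * ((Finset.univ.filter fun i => y i = c).card : ℝ) * ‖v c‖ ^ 2 +
              ⟪v c, ∑ i, y i • ξ i⟫)| ≤
        ‖v c‖ * (η / n) ^ 2 * ‖toEuclideanCLM (𝕜 := ℝ) (Xᵀ * X)‖ *
          ‖toEuclideanLin Xᵀ yE‖ * (t * (t - 1) / 2) := by
  have ha : 0 ≤ η / n := by positivity
  have hadj : ∀ u w, ⟪u, toEuclideanLin Xᵀ w⟫ = ⟪toEuclideanLin X u, w⟫ := by
    intro u w
    rw [← conjTranspose_eq_transpose_of_trivial, toEuclideanLin_conjTranspose_eq_adjoint,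
      LinearMap.adjoint_inner_right]
  have hG : ∀ u, toEuclideanCLM (𝕜 := ℝ) (Xᵀ * X) u =
      toEuclideanLin Xᵀ (toEuclideanLin X u) := by
    intro u
    ext i
    simp [toLpLin_apply, Matrix.mulVec_mulVec]
  have hg : toEuclideanLin Xᵀ yE = ∑ i, y i • x i := by
    ext j
    simp [hyE, hX, Matrix.mulVec, dotProduct, mul_comm]
  intro t
  have hdev := norm_iterate_sub_le (toEuclideanCLM (𝕜 := ℝ) (Xᵀ * X)) (toEuclideanLin Xᵀ yE)
    (η / n) ha (norm_sub_smul_gram_le _ _ hadj _ hG _ ha hstep) β h0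
    (fun t => by rw [hrec, hG, map_sub]; module) t
  rw [← inner_core_sum x ξ s y hy v hx horth_core c hc fun i => horth_cs c hc _ (hs i), ← hg]
  calc |⟪v c, β t⟫ - η * t / n * ⟪v c, toEuclideanLin Xᵀ yE⟫|
      = |⟪v c, β t - (η / n * t) • toEuclideanLin Xᵀ yE⟫| := by
        rw [inner_sub_right, inner_smul_right, mul_div_right_comm η]
    _ ≤ ‖v c‖ * ‖β t - (η / n * t) • toEuclideanLin Xᵀ yE‖ := abs_real_inner_le_norm _ _
    _ ≤ ‖v c‖ * _ := mul_le_mul_of_nonneg_left hdev (norm_nonneg _)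
    _ = _ := by ring
end

section
/- Under the data model, consider gradient descent β(0) = 0, β(t+1) = β(t) − (η/n)Xᵀ(Xβ(t) − y) with η > 0 and (η/n)‖XᵀX‖ ≤ 1 (ℓ2 operator norm). Then for each spurious feature v_s ∈ A and every natural number t, |⟨v_s, β(t)⟩ − (ηt/n)((n_{1,s} − n_{−1,s})·‖v_s‖² + ⟨v_s, ∑_i y_i ξ_i⟩)| ≤ ‖v_s‖ · (η/n)² · ‖XᵀX‖ · ‖Xᵀy‖ · t(t−1)/2. That is, the contribution of a spurious feature to the model grows linearly in t at a rate proportional to the spurious correlation (n_{1,s} − n_{−1,s})‖v_s‖², up to the noise alignment and a quadratically small error. -/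
/-!
Write `T` for the operator of `X`, `a = η / n` and `b = Xᵀy`, so that gradient descent reads
`β(t+1) = (1 - a T†T) β(t) + a b`. Under the step-size condition `a ‖T†T‖ ≤ 1` the operator
`1 - a T†T` is a contraction (`norm_sub_smul_adjoint_le`), hence `‖β(t)‖ ≤ t a ‖b‖`. The
deviation `β(t) - t a b` changes by `-a T†T β(t)` at each step, so its norm is at most
`∑_{k<t} a ‖T†T‖ · k a ‖b‖ = a² ‖T†T‖ ‖b‖ t(t-1)/2` (`norm_gd_sub_linear_le`). Pairing with `vs`
and using Cauchy–Schwarz gives the bound, once `⟪vs, b⟫ = ∑ i, y i ⟪vs, x i⟫` is evaluated by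
orthogonality of the features (`inner_sum_label_smul`).
-/

open Matrix
open scoped Classical
open scoped RealInnerProductSpace

section GradientDescent

variable {E F : Type*} [NormedAddCommGroup E] [InnerProductSpace ℝ E] [CompleteSpace E]
  [NormedAddCommGroup F] [InnerProductSpace ℝ F] [CompleteSpace F]

/-- A gradient step on `‖T z‖² / 2` is a contraction: expanding the square, the first-order gain
`2 a ‖T z‖²` dominates the second-order loss `a² ‖T†T z‖² ≤ a (a ‖T‖²) ‖T z‖²`. -/
lemma norm_sub_smul_adjoint_le_s10 (T : E →L[ℝ] F) (a : ℝ) (ha : 0 ≤ a)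
    (hstep : a * ‖T.adjoint ∘L T‖ ≤ 1) (z : E) :
    ‖z - a • T.adjoint (T z)‖ ≤ ‖z‖ := by
  rw [ContinuousLinearMap.norm_adjoint_comp_self] at hstep
  have h1 : ‖T.adjoint (T z)‖ ≤ ‖T‖ * ‖T z‖ := by
    simpa using T.adjoint.le_opNorm (T z)
  have h2 : ‖T.adjoint (T z)‖ ^ 2 ≤ (‖T‖ * ‖T‖) * ‖T z‖ ^ 2 := by
    calc ‖T.adjoint (T z)‖ ^ 2 ≤ (‖T‖ * ‖T z‖) ^ 2 := by gcongr
      _ = _ := by ring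
  have h3 : ⟪z, T.adjoint (T z)⟫ = ‖T z‖ ^ 2 := by
    rw [ContinuousLinearMap.adjoint_inner_right, real_inner_self_eq_norm_sq]
  have h4 : a ^ 2 * ‖T.adjoint (T z)‖ ^ 2 ≤ a * ‖T z‖ ^ 2 := by
    calc a ^ 2 * ‖T.adjoint (T z)‖ ^ 2 ≤ a ^ 2 * ((‖T‖ * ‖T‖) * ‖T z‖ ^ 2) := by gcongr
      _ = (a * (‖T‖ * ‖T‖)) * (a * ‖T z‖ ^ 2) := by ring
      _ ≤ 1 * (a * ‖T z‖ ^ 2) := by gcongr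
      _ = _ := one_mul _
  have h5 : 0 ≤ a * ‖T z‖ ^ 2 := by positivity
  refine le_of_sq_le_sq ?_ (norm_nonneg _)
  rw [norm_sub_sq_real, inner_smul_right, h3, norm_smul, mul_pow, Real.norm_eq_abs, sq_abs]
  linarith

/-- Gradient descent from `0` stays within `O(t²)` of its linearization `t a T†w` at time `0`. -/
lemma norm_gd_sub_linear_le (T : E →L[ℝ] F) (w : F) (a : ℝ) (ha : 0 ≤ a)
    (hstep : a * ‖T.adjoint ∘L T‖ ≤ 1) (β : ℕ → E) (h0 : β 0 = 0)
    (hrec : ∀ t, β (t + 1) = β t - a • T.adjoint (T (β t) - w)) (t : ℕ) :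
    ‖β t - (t * a) • T.adjoint w‖ ≤
      a ^ 2 * ‖T.adjoint ∘L T‖ * ‖T.adjoint w‖ * (t * (t - 1) / 2) := by
  have hgrow : ∀ t : ℕ, ‖β t‖ ≤ t * a * ‖T.adjoint w‖ := by
    intro t
    induction t with
    | zero => simp [h0]
    | succ t ih =>
      have e : β (t + 1) = (β t - a • T.adjoint (T (β t))) + a • T.adjoint w := by
        rw [hrec, map_sub, smul_sub]; abel
      calc ‖β (t + 1)‖ ≤ ‖β t - a • T.adjoint (T (β t))‖ + ‖a • T.adjoint w‖ := by
            rw [e]; exact norm_add_le _ _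
        _ ≤ t * a * ‖T.adjoint w‖ + a * ‖T.adjoint w‖ := by
            rw [norm_smul, Real.norm_of_nonneg ha]
            gcongr
            exact (norm_sub_smul_adjoint_le_s10 T a ha hstep _).trans ih
        _ = _ := by push_cast; ring
  induction t with
  | zero => simp [h0]
  | succ t ih =>
    have e : β (t + 1) - ((t + 1 : ℕ) * a) • T.adjoint w =
        (β t - (t * a) • T.adjoint w) - a • (T.adjoint ∘L T) (β t) := by
      rw [hrec, map_sub, ContinuousLinearMap.comp_apply]
      push_cast
      module
    calc _ ≤ ‖β t - (t * a) • T.adjoint w‖ + ‖a • (T.adjoint ∘L T) (β t)‖ := by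
          rw [e]; exact norm_sub_le _ _
      _ ≤ a ^ 2 * ‖T.adjoint ∘L T‖ * ‖T.adjoint w‖ * (t * (t - 1) / 2) +
          a * (‖T.adjoint ∘L T‖ * (t * a * ‖T.adjoint w‖)) := by
          rw [norm_smul, Real.norm_of_nonneg ha]
          gcongr
          exact (ContinuousLinearMap.le_opNorm _ _).trans (by gcongr; exact hgrow t)
      _ = _ := by push_cast; ring

end GradientDescent

/-- The alignment of `Xᵀy = ∑ i, y i • x i` with a spurious feature: orthogonality kills the core
features and all other spurious features, leaving the spurious correlation and the noise. -/
lemma inner_sum_label_smul {d n : ℕ} (x ξ s : Fin n → EuclideanSpace ℝ (Fin d))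
    (y : Fin n → ℝ) (hy : ∀ i, y i = 1 ∨ y i = -1)
    (v : ℝ → EuclideanSpace ℝ (Fin d)) (A : Finset (EuclideanSpace ℝ (Fin d))) (hs : ∀ i, s i ∈ A)
    (hx : ∀ i, x i = v (y i) + s i + ξ i)
    (horth_cs : ∀ c : ℝ, c = 1 ∨ c = -1 → ∀ u ∈ A, ⟪v c, u⟫ = 0)
    (horth_ss : ∀ u ∈ A, ∀ w ∈ A, u ≠ w → ⟪u, w⟫ = 0)
    (vs : EuclideanSpace ℝ (Fin d)) (hvs : vs ∈ A) :
    ⟪vs, ∑ i, y i • x i⟫ =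
      (((Finset.univ.filter fun i => y i = 1 ∧ s i = vs).card : ℝ) -
        ((Finset.univ.filter fun i => y i = -1 ∧ s i = vs).card : ℝ)) * ‖vs‖ ^ 2 +
        ⟪vs, ∑ i, y i • ξ i⟫ := by
  rw [inner_sum, inner_sum, Finset.card_filter, Finset.card_filter]
  push_cast
  rw [← Finset.sum_sub_distrib, Finset.sum_mul, ← Finset.sum_add_distrib]
  refine Finset.sum_congr rfl fun i _ => ?_
  have hc : ⟪vs, v (y i)⟫ = 0 := by
    rw [real_inner_comm]; exact horth_cs _ (hy i) vs hvs
  rw [hx, inner_smul_right, inner_smul_right, inner_add_right, inner_add_right, hc]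
  by_cases h : s i = vs
  · rw [h, real_inner_self_eq_norm_sq]
    rcases hy i with h1 | h1 <;> rw [h1] <;> norm_num <;> ring
  · rw [horth_ss vs hvs (s i) (hs i) (Ne.symm h)]
    simp [h]

/-- Data model: `n` examples `x i = v (y i) + s i + ξ i` in `ℝ^d` with labels
`y i ∈ {1, −1}`, core features `v 1, v (−1)`, spurious features from a finite orthogonal
set `A`, and `X` the matrix with rows `x i`.  Gradient descent `β(0) = 0`,
`β(t+1) = β(t) − (η/n)Xᵀ(Xβ(t) − y)` with `η > 0` and `(η/n)‖XᵀX‖ ≤ 1` (ℓ2 operator norm)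
satisfies, for each spurious feature `vs ∈ A` and every `t`,
`|⟪vs, β t⟫ − (ηt/n)((n_{1,s} − n_{−1,s})·‖vs‖² + ⟪vs, ∑ i, y i • ξ i⟫)|
  ≤ ‖vs‖ (η/n)² ‖XᵀX‖ ‖Xᵀy‖ t(t−1)/2`. -/
theorem stmt_10 (d n : ℕ)
    (x ξ s : Fin n → EuclideanSpace ℝ (Fin d))
    (y : Fin n → ℝ) (hy : ∀ i, y i = 1 ∨ y i = -1)
    (v : ℝ → EuclideanSpace ℝ (Fin d))
    (A : Finset (EuclideanSpace ℝ (Fin d))) (hs : ∀ i, s i ∈ A)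
    (hx : ∀ i, x i = v (y i) + s i + ξ i)
    (horth_core : ⟪v 1, v (-1)⟫ = 0)
    (horth_cs : ∀ c : ℝ, c = 1 ∨ c = -1 → ∀ u ∈ A, ⟪v c, u⟫ = 0)
    (horth_ss : ∀ u ∈ A, ∀ w ∈ A, u ≠ w → ⟪u, w⟫ = 0)
    (X : Matrix (Fin n) (Fin d) ℝ)
    (hX : X = Matrix.of fun i => (WithLp.equiv 2 (Fin d → ℝ)) (x i))
    (yE : EuclideanSpace ℝ (Fin n))
    (hyE : yE = (WithLp.equiv 2 (Fin n → ℝ)).symm y)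
    (η : ℝ) (hη : 0 < η)
    (hstep : (η / n) * ‖toEuclideanCLM (𝕜 := ℝ) (Xᵀ * X)‖ ≤ 1)
    (β : ℕ → EuclideanSpace ℝ (Fin d)) (h0 : β 0 = 0)
    (hrec : ∀ t : ℕ,
      β (t + 1) = β t - (η / n) • toEuclideanLin Xᵀ (toEuclideanLin X (β t) - yE))
    (vs : EuclideanSpace ℝ (Fin d)) (hvs : vs ∈ A) :
    ∀ t : ℕ,
      |⟪vs, β t⟫ -
          (η * t / n) *
            ((((Finset.univ.filter fun i => y i = 1 ∧ s i = vs).card : ℝ) -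
                ((Finset.univ.filter fun i => y i = -1 ∧ s i = vs).card : ℝ)) * ‖vs‖ ^ 2 +
              ⟪vs, ∑ i, y i • ξ i⟫)| ≤
        ‖vs‖ * (η / n) ^ 2 * ‖toEuclideanCLM (𝕜 := ℝ) (Xᵀ * X)‖ *
          ‖toEuclideanLin Xᵀ yE‖ * (t * (t - 1) / 2) := by
  intro t
  set T : EuclideanSpace ℝ (Fin d) →L[ℝ] EuclideanSpace ℝ (Fin n) :=
    (toEuclideanLin X).toContinuousLinearMap with hT
  have hTapp : ∀ z, toEuclideanLin X z = T z := fun z => rfl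
  have hadj : ∀ w, toEuclideanLin Xᵀ w = T.adjoint w := by
    intro w
    refine ext_inner_right ℝ fun z => ?_
    rw [ContinuousLinearMap.adjoint_inner_left, ← hTapp, ← conjTranspose_eq_transpose_of_trivial,
      Matrix.toEuclideanLin_conjTranspose_eq_adjoint, LinearMap.adjoint_inner_left]
  have hM : toEuclideanCLM (𝕜 := ℝ) (Xᵀ * X) = T.adjoint ∘L T := by
    ext1 z
    rw [ContinuousLinearMap.comp_apply, ← hadj, ← hTapp]
    apply (WithLp.equiv 2 (Fin d → ℝ)).injective
    simp [Matrix.toLpLin_apply, Matrix.mulVec_mulVec]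
  have hb : T.adjoint yE = ∑ i, y i • x i := by
    rw [← hadj]
    ext j
    simp [hX, hyE, Matrix.toLpLin_apply, Matrix.mulVec, dotProduct, mul_comm]
  simp only [hadj, hTapp] at hrec
  rw [hM] at hstep ⊢
  rw [hadj]
  have key := norm_gd_sub_linear_le T yE (η / n) (by positivity) hstep β h0 hrec t
  rw [← inner_sum_label_smul x ξ s y hy v A hs hx horth_cs horth_ss vs hvs, ← hb]
  have e : ⟪vs, β t⟫ - (η * t / n) * ⟪vs, T.adjoint yE⟫ =
      ⟪vs, β t - (t * (η / n)) • T.adjoint yE⟫ := by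
    rw [inner_sub_right, inner_smul_right]; ring
  rw [e]
  calc _ ≤ ‖vs‖ * ‖β t - (t * (η / n)) • T.adjoint yE‖ := abs_real_inner_le_norm _ _
    _ ≤ ‖vs‖ * _ := mul_le_mul_of_nonneg_left key (norm_nonneg _)
    _ = _ := by ring
end
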